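/- For κ ≠ 0, every finite-dimensional U_q(sl*₂,κ)-module is semisimple. -/

import Mathlib

noncomputable section

/-- `q` is not a root of unity (in particular nonzero). -/
def NotRootOfUnity (q : ℂ) : Prop := q ≠ 0 ∧ ∀ n : ℕ, 0 < n → q ^ n ≠ 1

/-- Defining relations of the Hopf PBW-deformation `U_q(sl*₂, κ)`: generators
`0 = K`, `1 = K⁻¹`, `2 = E`, `3 = F`, relations `KK⁻¹ = K⁻¹K = 1`, `KE = q²EK`,
`KF = q⁻²FK`, `EF - FE = a(Kᵐ - K⁻ᵐ)`.  The case `a = 0` is `U_q(sl*₂)` itself. -/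
inductive UqRel (q a : ℂ) (m : ℕ) : FreeAlgebra ℂ (Fin 4) → FreeAlgebra ℂ (Fin 4) → Prop
  | KKinv : UqRel q a m (FreeAlgebra.ι ℂ 0 * FreeAlgebra.ι ℂ 1) 1
  | KinvK : UqRel q a m (FreeAlgebra.ι ℂ 1 * FreeAlgebra.ι ℂ 0) 1
  | KE : UqRel q a m (FreeAlgebra.ι ℂ 0 * FreeAlgebra.ι ℂ 2)
      (q ^ 2 • (FreeAlgebra.ι ℂ 2 * FreeAlgebra.ι ℂ 0))
  | KF : UqRel q a m (FreeAlgebra.ι ℂ 0 * FreeAlgebra.ι ℂ 3)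
      ((q ^ 2)⁻¹ • (FreeAlgebra.ι ℂ 3 * FreeAlgebra.ι ℂ 0))
  | EF : UqRel q a m (FreeAlgebra.ι ℂ 2 * FreeAlgebra.ι ℂ 3)
      (FreeAlgebra.ι ℂ 3 * FreeAlgebra.ι ℂ 2 +
        a • (FreeAlgebra.ι ℂ 0 ^ m - FreeAlgebra.ι ℂ 1 ^ m))

/-- The algebra `U_q(sl*₂, κ)`; `a = 0` gives the new type quantum group `U_q(sl*₂)`. -/
abbrev Uq (q a : ℂ) (m : ℕ) : Type := RingQuot (UqRel q a m)

def genK (q a : ℂ) (m : ℕ) : Uq q a m := RingQuot.mkAlgHom ℂ (UqRel q a m) (FreeAlgebra.ι ℂ 0)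
def genKinv (q a : ℂ) (m : ℕ) : Uq q a m := RingQuot.mkAlgHom ℂ (UqRel q a m) (FreeAlgebra.ι ℂ 1)
def genE (q a : ℂ) (m : ℕ) : Uq q a m := RingQuot.mkAlgHom ℂ (UqRel q a m) (FreeAlgebra.ι ℂ 2)
def genF (q a : ℂ) (m : ℕ) : Uq q a m := RingQuot.mkAlgHom ℂ (UqRel q a m) (FreeAlgebra.ι ℂ 3)

/-!
Both `E` and `F` act nilpotently. Put `b = cᵐ`, where `c = q²`. In a module on which `F` is
nilpotent, the eigenvalues of `K²ᵐ` on vectors killed by `E` are among `1, b, b², …`, and dually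
those on the cokernel of `E` are among `1, b⁻¹, b⁻², …`. Let `N` be a submodule containing `ker E`,
and let `E w ∈ N`. Modulo `N`, the vector `w` only has eigenvalues `bⁱ`, so `E w` would only have
eigenvalues `bⁱ⁺²`, while the eigenvalues on `N / E N` are `b⁻ʲ`; hence `E w ∈ E N` and `w ∈ N`.
Therefore `ker E` generates `M`, which gives `ker E + F M = M`, and exchanging `E` and `F` and
counting dimensions makes this sum direct.

Finally `K` is semisimple on `ker E`, because a separable polynomial in `K` vanishes there. A
`K`-stable complement of `N ∩ ker E` in `ker E` generates a complement of the submodule `N`: the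
two together contain `ker E`, and no nonzero vector in both is killed by `E`.
-/

open Algebra LinearMap Module Module.End Polynomial

section Commutation

variable {R A : Type*} [CommRing R] [Ring A] [Algebra R A] {x y z : A} {r : R}

theorem semiconjBy_aeval (h : SemiconjBy x y z) (p : R[X]) :
    SemiconjBy x (aeval y p) (aeval z p) := by
  induction p using Polynomial.induction_on' with
  | add p q hp hq => simpa only [map_add] using hp.add_right hq
  | monomial n s =>
    simpa only [aeval_monomial] using
      SemiconjBy.mul_right (Algebra.commutes s x).symm (h.pow_right n)

theorem mul_pow_of_mul_eq_smul (h : x * y = r • (y * x)) (n : ℕ) :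
    x * y ^ n = r ^ n • (y ^ n * x) := by
  have hxy : SemiconjBy x y (r • y) := by rw [SemiconjBy, h, smul_mul_assoc]
  simpa only [SemiconjBy, _root_.smul_pow, smul_mul_assoc] using hxy.pow_right n

theorem pow_mul_of_mul_eq_smul (h : x * y = r • (y * x)) (n : ℕ) :
    x ^ n * y = r ^ n • (y * x ^ n) := by
  have hyx : SemiconjBy y (r • x) x := by rw [SemiconjBy, h, mul_smul_comm]
  simpa only [SemiconjBy, _root_.smul_pow, mul_smul_comm] using (hyx.pow_right n).symm

end Commutation

section RootsOfUnity

variable {k : Type*} [Field k] {b : k}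

theorem pow_injective_of_not_isOfFinOrder (hb₀ : b ≠ 0) (hb : ¬IsOfFinOrder b) :
    Function.Injective fun n : ℕ => b ^ n := by
  rw [← Units.val_mk0 hb₀, Units.isOfFinOrder_val] at hb
  intro i j hij
  exact injective_pow_iff_not_isOfFinOrder.2 hb (Units.ext <| by simpa using hij)

theorem not_isOfFinOrder_inv₀ (hb : ¬IsOfFinOrder b) : ¬IsOfFinOrder b⁻¹ := by
  simpa only [isOfFinOrder_iff_pow_eq_one, inv_pow, inv_eq_one] using hb

theorem geom_sum_ne_zero_of_not_isOfFinOrder (hb : ¬IsOfFinOrder b) (n : ℕ) :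
    ∑ i ∈ Finset.range (n + 1), b ^ i ≠ 0 := by
  intro h
  refine hb (isOfFinOrder_iff_pow_eq_one.2 ⟨n + 1, n.succ_pos, sub_eq_zero.1 ?_⟩)
  rw [← geom_sum_mul, h, zero_mul]

end RootsOfUnity

section WeightPoly

variable {k : Type*} [Field k] {b : k}

/-- The polynomial with roots `1, b, …, bⁿ⁻¹`. When `Fⁿ = 0` and `b = cᵐ`, these are the possible
eigenvalues of `K²ᵐ` on vectors killed by `E`. -/
def weightPoly (b : k) (n : ℕ) : k[X] := ∏ i ∈ Finset.range n, (X - C (b ^ i))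

theorem weightPoly_succ (b : k) (n : ℕ) :
    weightPoly b (n + 1) = weightPoly b n * (X - C (b ^ n)) :=
  Finset.prod_range_succ _ n

theorem isCoprime_weightPoly_comp (hb₀ : b ≠ 0) (hb : ¬IsOfFinOrder b) (n l : ℕ) :
    IsCoprime (weightPoly b n) ((weightPoly b⁻¹ l).comp (C (b ^ 2) * X)) := by
  refine IsCoprime.prod_left fun i _ => ?_
  rw [(irreducible_X_sub_C _).coprime_iff_not_dvd, dvd_iff_isRoot, IsRoot.def, weightPoly,
    eval_comp, eval_prod, Finset.prod_eq_zero_iff]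
  rintro ⟨j, -, hj⟩
  refine hb (isOfFinOrder_iff_pow_eq_one.2 ⟨2 + i + j, by lia, ?_⟩)
  have hij : b ^ 2 * b ^ i = (b ^ j)⁻¹ := by simpa [sub_eq_zero] using hj
  rw [pow_add, pow_add, hij, inv_mul_cancel₀ (pow_ne_zero j hb₀)]

theorem separable_expand_weightPoly (hb₀ : b ≠ 0) (hb : ¬IsOfFinOrder b) {d : ℕ}
    (hd : (d : k) ≠ 0) (n : ℕ) : (expand k d (weightPoly b n)).Separable := by
  simp only [weightPoly, map_prod, map_sub, expand_X, expand_C]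
  refine separable_prod' (fun i _ j _ hij => ?_)
    fun i _ => separable_X_pow_sub_C _ hd (pow_ne_zero i hb₀)
  have hroots : b ^ i ≠ b ^ j := (pow_injective_of_not_isOfFinOrder hb₀ hb).ne hij
  simpa using (isCoprime_X_sub_C_of_isUnit_sub (sub_ne_zero.2 hroots).isUnit).map
    (expand k d : k[X] →+* k[X])

end WeightPoly

section LinearAlgebra

variable {k : Type*} [Field k]

/- Conjugation by `u` scales `x` by `c`, so the minimal polynomial of `x` is homogeneous for the
substitution `X ↦ cX`, which forces it to be a power of `X`. -/
theorem isNilpotent_of_mul_eq_smul_mul {A : Type*} [Ring A] [Algebra k A] {c : k} {u v x : A}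
    (hc₀ : c ≠ 0) (hc : ¬IsOfFinOrder c) (huv : u * v = 1) (hux : u * x = c • (x * u))
    (hx : IsIntegral k x) : IsNilpotent x := by
  set p := minpoly k x
  have hp : p.Monic := minpoly.monic hx
  have hroot : aeval x (p.comp (C c * X)) = 0 := by
    have hconj : SemiconjBy u x (c • x) := by rw [SemiconjBy, hux, smul_mul_assoc]
    have hpx : aeval (c • x) p * u = 0 := by
      rw [← (semiconjBy_aeval hconj p).eq, minpoly.aeval, mul_zero]
    calc aeval x (p.comp (C c * X)) = aeval (c • x) p * (u * v) := by
          simp [aeval_comp, Algebra.smul_def, huv]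
      _ = 0 := by rw [← mul_assoc, hpx, zero_mul]
  have hscale : p.comp (C c * X) = C (p.comp (C c * X)).leadingCoeff * p :=
    eq_leadingCoeff_mul_of_monic_of_dvd_of_natDegree_le hp
      (minpoly.dvd k x hroot) (by rw [natDegree_comp, natDegree_C_mul_X c hc₀, mul_one])
  set l := (p.comp (C c * X)).leadingCoeff
  have hcoeff (i : ℕ) : p.coeff i * c ^ i = l * p.coeff i := by
    rw [← comp_C_mul_X_coeff, hscale, coeff_C_mul]
  have hl : c ^ p.natDegree = l := by
    simpa only [hp.coeff_natDegree, one_mul, mul_one] using hcoeff p.natDegree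
  have htrailing : c ^ p.natTrailingDegree = l :=
    mul_left_cancel₀ (trailingCoeff_nonzero_iff_nonzero.2 (minpoly.ne_zero hx))
      ((hcoeff p.natTrailingDegree).trans (mul_comm l _))
  have hpX : p = X ^ p.natDegree :=
    hp.eq_X_pow_iff_natTrailingDegree_eq_natDegree.2 <|
      pow_injective_of_not_isOfFinOrder hc₀ hc (htrailing.trans hl.symm)
  refine ⟨p.natDegree, ?_⟩
  rw [← aeval_X_pow (R := k), ← hpX, minpoly.aeval]

theorem mem_invtSubmodule_of_mul_eq_one {V : Type*} [AddCommGroup V] [Module k V]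
    [FiniteDimensional k V] {f g : End k V} (hgf : g * f = 1) {W : Submodule k V}
    (hW : W ∈ f.invtSubmodule) : W ∈ g.invtSubmodule := by
  have hleft : Function.LeftInverse g f := fun v => DFunLike.congr_fun hgf v
  have hmap : W.map f = W :=
    Submodule.eq_of_le_of_finrank_eq ((mem_invtSubmodule_iff_map_le _).1 hW)
      (Submodule.equivMapOfInjective f hleft.injective W).finrank_eq.symm
  rintro w hw
  obtain ⟨v, hv, rfl⟩ := hmap.ge hw
  rwa [Submodule.mem_comap, hleft v]

theorem coe_aeval_restrict_apply {R V : Type*} [CommRing R] [AddCommGroup V] [Module R V]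
    {f : End R V} {W : Submodule R V} (hW : W ∈ f.invtSubmodule) (p : R[X]) (w : W) :
    (aeval (LinearMap.restrict f hW) p w : V) = aeval f p w := by
  induction p using Polynomial.induction_on' with
  | add p q hp hq => simp only [map_add, LinearMap.add_apply, Submodule.coe_add, hp, hq]
  | monomial n r =>
    simp only [aeval_monomial, ← Algebra.smul_def, LinearMap.smul_apply, pow_restrict n hW]
    rfl

theorem isSemisimple_restrict_of_squarefree {V : Type*} [AddCommGroup V] [Module k V] {f : End k V}
    {W : Submodule k V} (hW : W ∈ f.invtSubmodule) {p : k[X]} (hp : Squarefree p)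
    (hpW : ∀ w ∈ W, aeval f p w = 0) : End.IsSemisimple (LinearMap.restrict f hW) :=
  isSemisimple_of_squarefree_aeval_eq_zero hp <| LinearMap.ext fun w => Subtype.ext <|
    (coe_aeval_restrict_apply hW p w).trans (hpW w w.2)

theorem disjoint_ker_range_of_sup_eq_top {V : Type*} [AddCommGroup V] [Module k V]
    [FiniteDimensional k V] {f g : End k V} (hfg : f.ker ⊔ g.range = ⊤)
    (hgf : g.ker ⊔ f.range = ⊤) : Disjoint f.ker g.range := by
  have hf := f.finrank_range_add_finrank_ker
  have hg := g.finrank_range_add_finrank_ker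
  have hfg' := Submodule.finrank_sup_add_finrank_inf_eq f.ker g.range
  have hgf' := Submodule.finrank_sup_add_finrank_inf_eq g.ker f.range
  rw [hfg, finrank_top] at hfg'
  rw [hgf, finrank_top] at hgf'
  rw [disjoint_iff, ← Submodule.finrank_eq_zero (R := k)]
  lia

end LinearAlgebra

section ModuleOverAlgebra

variable {k A M : Type*} [Field k] [Ring A] [Algebra k A] [AddCommGroup M] [Module k M] [Module A M]
  [IsScalarTower k A M]

theorem smul_mem_of_adjoin_eq_top {s : Set A} (hs : Algebra.adjoin k s = ⊤) {W : Submodule k M}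
    (hW : ∀ x ∈ s, W ∈ (lsmul k k M x).invtSubmodule) (x : A) {w : M} (hw : w ∈ W) :
    x • w ∈ W := by
  have hx : x ∈ Algebra.adjoin k s := hs ▸ Algebra.mem_top
  induction hx using Algebra.adjoin_induction generalizing w with
  | mem x hx => exact hW x hx hw
  | algebraMap r => rw [algebraMap_smul]; exact W.smul_mem r hw
  | add x y _ _ ihx ihy => rw [add_smul]; exact W.add_mem (ihx hw) (ihy hw)
  | mul x y _ _ ihx ihy => rw [mul_smul]; exact ihx (ihy hw)

theorem restrictScalars_span_eq_of_adjoin_eq_top {s : Set A} (hs : Algebra.adjoin k s = ⊤)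
    {W : Submodule k M} (hW : ∀ x ∈ s, W ∈ (lsmul k k M x).invtSubmodule) :
    (Submodule.span A (W : Set M)).restrictScalars k = W := by
  refine le_antisymm (fun v hv => ?_) Submodule.subset_span
  induction hv using Submodule.span_induction with
  | mem _ hw => exact hw
  | zero => exact W.zero_mem
  | add v w _ _ hv hw => exact W.add_mem hv hw
  | smul x w _ hw => exact smul_mem_of_adjoin_eq_top hs hW x hw

theorem pow_smul_mem_of_mem_invtSubmodule {x : A} {W : Submodule k M}
    (hW : W ∈ (lsmul k k M x).invtSubmodule) (n : ℕ) {w : M} (hw : w ∈ W) : x ^ n • w ∈ W := by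
  have hn := Submodule.le_comap_pow_of_le_comap W hW n
  rw [← map_pow] at hn
  exact hn hw

/-- The span of the vectors `xʲ w` with `w ∈ W`. For `x = F` and a `K`-stable space `W` of vectors
killed by `E`, this is the submodule generated by `W`. -/
def lowerings (x : A) (W : Submodule k M) : Submodule k M :=
  ⨆ j : ℕ, W.map (lsmul k k M (x ^ j))

theorem pow_smul_mem_lowerings (x : A) {W : Submodule k M} (j : ℕ) {w : M} (hw : w ∈ W) :
    x ^ j • w ∈ lowerings x W :=
  Submodule.mem_iSup_of_mem j (Submodule.mem_map_of_mem hw)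

theorem lowerings_le_iff {x : A} {W V : Submodule k M} :
    lowerings x W ≤ V ↔ ∀ j : ℕ, ∀ w ∈ W, x ^ j • w ∈ V := by
  simp only [lowerings, iSup_le_iff, Submodule.map_le_iff_le_comap]
  rfl

theorem le_lowerings (x : A) (W : Submodule k M) : W ≤ lowerings x W := fun _ hw => by
  simpa using pow_smul_mem_lowerings x 0 hw

theorem lowerings_mem_invtSubmodule (x : A) (W : Submodule k M) :
    lowerings x W ∈ (lsmul k k M x).invtSubmodule :=
  lowerings_le_iff.2 fun j _ hw => by
    simpa [← mul_smul, ← pow_succ'] using pow_smul_mem_lowerings x (j + 1) hw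

theorem lowerings_le_sup_range (x : A) (W : Submodule k M) :
    lowerings x W ≤ W ⊔ (lsmul k k M x).range := by
  refine lowerings_le_iff.2 ?_
  rintro (_ | j) w hw
  · simpa using Submodule.mem_sup_left hw
  · rw [pow_succ', mul_smul]
    exact Submodule.mem_sup_right ⟨x ^ j • w, rfl⟩

end ModuleOverAlgebra

/-- Generators of a deformed quantum `sl₂`-triple in a `k`-algebra: the defining relations of
`U_q(sl*₂, κ)` with `c = q²` and `Ki = K⁻¹`, for parameters with `a ≠ 0` and `cᵐ` not a root of
unity. Allowing every such `c` and `a` makes the notion stable under exchanging `E` and `F` and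
under passing to the opposite algebra. -/
structure IsQuantumTriple {k A : Type*} [Field k] [Ring A] [Algebra k A] (c a : k) (m : ℕ)
    (K Ki E F : A) : Prop where
  c_ne_zero : c ≠ 0
  a_ne_zero : a ≠ 0
  not_isOfFinOrder : ¬IsOfFinOrder (c ^ m)
  K_mul_Ki : K * Ki = 1
  Ki_mul_K : Ki * K = 1
  K_mul_E : K * E = c • (E * K)
  K_mul_F : K * F = c⁻¹ • (F * K)
  E_mul_F : E * F = F * E + a • (K ^ m - Ki ^ m)

namespace IsQuantumTriple

variable {k A M : Type*} [Field k] [Ring A] [Algebra k A] [AddCommGroup M] [Module k M] [Module A M]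
  [IsScalarTower k A M] {c a : k} {m : ℕ} {K Ki E F : A}

theorem symm (h : IsQuantumTriple c a m K Ki E F) : IsQuantumTriple c⁻¹ (-a) m K Ki F E where
  c_ne_zero := inv_ne_zero h.c_ne_zero
  a_ne_zero := neg_ne_zero.2 h.a_ne_zero
  not_isOfFinOrder := by
    rw [inv_pow]
    exact not_isOfFinOrder_inv₀ h.not_isOfFinOrder
  K_mul_Ki := h.K_mul_Ki
  Ki_mul_K := h.Ki_mul_K
  K_mul_E := h.K_mul_F
  K_mul_F := by rw [inv_inv, h.K_mul_E]
  E_mul_F := by rw [h.E_mul_F, neg_smul, add_neg_cancel_right]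

theorem op (h : IsQuantumTriple c a m K Ki E F) :
    IsQuantumTriple c⁻¹ (-a) m (.op K) (.op Ki) (.op E) (.op F : Aᵐᵒᵖ) where
  c_ne_zero := h.symm.c_ne_zero
  a_ne_zero := h.symm.a_ne_zero
  not_isOfFinOrder := h.symm.not_isOfFinOrder
  K_mul_Ki := MulOpposite.unop_injective h.Ki_mul_K
  Ki_mul_K := MulOpposite.unop_injective h.K_mul_Ki
  K_mul_E := MulOpposite.unop_injective <| by
    simp [h.K_mul_E, smul_smul, inv_mul_cancel₀ h.c_ne_zero]
  K_mul_F := MulOpposite.unop_injective <| by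
    simp [h.K_mul_F, smul_smul, mul_inv_cancel₀ h.c_ne_zero]
  E_mul_F := MulOpposite.unop_injective <| by simp [h.E_mul_F]

theorem c_pow_ne_zero (h : IsQuantumTriple c a m K Ki E F) : c ^ m ≠ 0 :=
  pow_ne_zero m h.c_ne_zero

theorem F_mul_K_pow (h : IsQuantumTriple c a m K Ki E F) (i : ℕ) :
    F * K ^ i = c ^ i • (K ^ i * F) := by
  rw [pow_mul_of_mul_eq_smul h.K_mul_F, inv_pow, smul_inv_smul₀ (pow_ne_zero i h.c_ne_zero)]

theorem E_mul_K_pow (h : IsQuantumTriple c a m K Ki E F) (i : ℕ) :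
    E * K ^ i = (c ^ i)⁻¹ • (K ^ i * E) := by
  rw [h.symm.F_mul_K_pow, inv_pow]

theorem E_mul_F_pow (h : IsQuantumTriple c a m K Ki E F) (n : ℕ) :
    E * F ^ (n + 1) * K ^ m = F ^ (n + 1) * E * K ^ m +
      (a * ∑ i ∈ Finset.range (n + 1), (c ^ m)⁻¹ ^ i) •
        (F ^ n * K ^ (2 * m) - (c ^ m) ^ n • F ^ n) := by
  have hEF : E * F * K ^ m = F * E * K ^ m + a • (K ^ (2 * m) - 1) := by
    have hKK : Ki ^ m * K ^ m = 1 := pow_mul_pow_eq_one m h.Ki_mul_K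
    rw [h.E_mul_F, add_mul, smul_mul_assoc, sub_mul, hKK, ← pow_add, two_mul]
  induction n with
  | zero => simpa using hEF
  | succ n ih =>
    have hF := h.F_mul_K_pow m
    have hb := h.c_pow_ne_zero
    set b := c ^ m
    set s := ∑ i ∈ Finset.range (n + 1), b⁻¹ ^ i
    have hs : ∑ i ∈ Finset.range (n + 1 + 1), b⁻¹ ^ i = b⁻¹ * s + 1 := geom_sum_succ
    have hs' : (b⁻¹ * s + 1) * b ^ (n + 1) = s * b ^ (n + 1) + 1 := by
      rw [← hs, geom_sum_succ', add_mul, inv_pow, inv_mul_cancel₀ (pow_ne_zero _ hb), add_comm]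
    have hKF : K ^ m * F = b⁻¹ • (F * K ^ m) := by rw [hF, inv_smul_smul₀ hb]
    have hKKF : K ^ (2 * m) * F = b⁻¹ • b⁻¹ • (F * K ^ (2 * m)) := by
      rw [two_mul, pow_add, mul_assoc, hKF, mul_smul_comm, ← mul_assoc, hKF, smul_mul_assoc,
        mul_assoc]
    calc E * F ^ (n + 1 + 1) * K ^ m = b • (E * F ^ (n + 1) * K ^ m * F) := by
          rw [pow_succ F (n + 1), mul_assoc, mul_assoc, hF]
          simp only [mul_smul_comm, mul_assoc]
      _ = b • (b⁻¹ • (F ^ (n + 1) * (E * F * K ^ m)) + (a * s) •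
            (b⁻¹ • b⁻¹ • (F ^ (n + 1) * K ^ (2 * m)) - b ^ n • F ^ (n + 1))) := by
          rw [ih]
          simp only [add_mul, sub_mul, smul_mul_assoc, mul_assoc, hKF, hKKF, mul_smul_comm,
            pow_succ]
      _ = F ^ (n + 1 + 1) * E * K ^ m + (a * (b⁻¹ * s + 1)) • (F ^ (n + 1) * K ^ (2 * m)) -
            (a * (s * b ^ (n + 1) + 1)) • F ^ (n + 1) := by
          simp only [hEF, mul_add, mul_sub, mul_smul_comm, mul_one, ← mul_assoc, ← pow_succ]
          match_scalars <;> field_simp <;> ring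
      _ = _ := by
          rw [hs, ← hs']
          module

theorem semiconjBy_E (h : IsQuantumTriple c a m K Ki E F) :
    SemiconjBy E ((c ^ m) ^ 2 • K ^ (2 * m)) (K ^ (2 * m)) := by
  rw [SemiconjBy, mul_smul_comm, h.E_mul_K_pow, ← pow_mul, mul_comm m,
    smul_inv_smul₀ (pow_ne_zero _ h.c_ne_zero)]

theorem weightPoly_smul_mem (h : IsQuantumTriple c a m K Ki E F) (N : Submodule A M) (n : ℕ)
    {v : M} (hE : E • v ∈ N) (hF : F ^ n • v ∈ N) :
    aeval (K ^ (2 * m)) (weightPoly (c ^ m) n) • v ∈ N := by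
  induction n generalizing v with
  | zero => simpa [weightPoly] using hF
  | succ n ih =>
    have hs := geom_sum_ne_zero_of_not_isOfFinOrder (not_isOfFinOrder_inv₀ h.not_isOfFinOrder) n
    have hEF : (E * F ^ (n + 1) * K ^ m) • v ∈ N := by
      rw [mul_assoc, pow_mul_of_mul_eq_smul (h.F_mul_K_pow m), mul_smul_comm, smul_assoc,
        mul_smul, mul_smul]
      exact N.smul_of_tower_mem _ (N.smul_mem E (N.smul_mem (K ^ m) hF))
    have hFE : (F ^ (n + 1) * E * K ^ m) • v ∈ N := by
      rw [mul_assoc, h.E_mul_K_pow, mul_smul_comm, smul_assoc, mul_smul, mul_smul]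
      exact N.smul_of_tower_mem _ (N.smul_mem (F ^ (n + 1)) (N.smul_mem (K ^ m) hE))
    rw [weightPoly_succ, map_mul, mul_smul, map_sub, aeval_X, aeval_C, algebraMap_eq_smul_one]
    apply ih
    · rw [← mul_smul, mul_sub, h.E_mul_K_pow, mul_smul_comm, mul_one, sub_smul, smul_assoc,
        smul_assoc, mul_smul]
      exact N.sub_mem (N.smul_of_tower_mem _ (N.smul_mem (K ^ (2 * m)) hE))
        (N.smul_of_tower_mem _ hE)
    · refine ((N.restrictScalars k).smul_mem_iff (mul_ne_zero h.a_ne_zero hs)).1 ?_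
      rw [← mul_smul, mul_sub, mul_smul_comm, mul_one, ← smul_assoc,
        ← sub_eq_of_eq_add' (h.E_mul_F_pow n), sub_smul]
      exact N.sub_mem hEF hFE

theorem aeval_weightPoly_mem_span (h : IsQuantumTriple c a m K Ki E F) (n : ℕ) :
    aeval (K ^ (2 * m)) (weightPoly (c ^ m) n) ∈ Ideal.span {E, F ^ n} := by
  have hE : E ∈ Ideal.span {E, F ^ n} := Ideal.subset_span (Set.mem_insert _ _)
  have hF : F ^ n ∈ Ideal.span {E, F ^ n} := Ideal.subset_span (Set.mem_insert_of_mem _ rfl)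
  simpa using h.weightPoly_smul_mem (Ideal.span {E, F ^ n}) n (v := 1) (by simpa) (by simpa)

theorem exists_aeval_weightPoly_inv_eq (h : IsQuantumTriple c a m K Ki E F) (n : ℕ) :
    ∃ x y : A, aeval (K ^ (2 * m)) (weightPoly (c ^ m)⁻¹ n) = E * x + F ^ n * y := by
  obtain ⟨x, y, hxy⟩ := Ideal.mem_span_pair.1 (h.op.aeval_weightPoly_mem_span n)
  refine ⟨x.unop, y.unop, MulOpposite.op_injective ?_⟩
  simpa [← aeval_op_apply] using hxy.symm

theorem ker_mem_invtSubmodule (h : IsQuantumTriple c a m K Ki E F) :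
    (lsmul k k M E).ker ∈ (lsmul k k M K).invtSubmodule := by
  intro v hv
  change E • K • v = 0
  have hEv : E • v = 0 := hv
  have hEK := h.E_mul_K_pow 1
  rw [pow_one, pow_one] at hEK
  rw [← mul_smul, hEK, smul_assoc, mul_smul, hEv, smul_zero, smul_zero]

theorem lowerings_mem_invtSubmodule_K (h : IsQuantumTriple c a m K Ki E F) {W : Submodule k M}
    (hWK : W ∈ (lsmul k k M K).invtSubmodule) :
    lowerings F W ∈ (lsmul k k M K).invtSubmodule := by
  refine lowerings_le_iff.2 fun j w hw => ?_
  change K • F ^ j • w ∈ lowerings F W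
  rw [← mul_smul, mul_pow_of_mul_eq_smul h.K_mul_F, smul_assoc, mul_smul]
  exact Submodule.smul_mem _ _ (pow_smul_mem_lowerings F j (hWK hw))

theorem lowerings_mem_invtSubmodule_E (h : IsQuantumTriple c a m K Ki E F) {W : Submodule k M}
    (hWE : W ≤ (lsmul k k M E).ker) (hWK : W ∈ (lsmul k k M K).invtSubmodule)
    (hWKi : W ∈ (lsmul k k M Ki).invtSubmodule) :
    lowerings F W ∈ (lsmul k k M E).invtSubmodule := by
  refine lowerings_le_iff.2 fun j w hw => ?_
  change E • F ^ j • w ∈ lowerings F W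
  rcases j with _ | j
  · have hEw : E • w = 0 := hWE hw
    simp [hEw]
  · obtain ⟨v, hv, rfl⟩ : ∃ v ∈ W, K ^ m • v = w :=
      ⟨Ki ^ m • w, pow_smul_mem_of_mem_invtSubmodule hWKi m hw, by
        rw [← mul_smul, pow_mul_pow_eq_one m h.K_mul_Ki, one_smul]⟩
    have hEv : E • K ^ m • v = 0 := hWE hw
    have hKv : K ^ (2 * m) • v ∈ W := pow_smul_mem_of_mem_invtSubmodule hWK _ hv
    rw [← mul_smul, ← mul_smul, h.E_mul_F_pow, add_smul, mul_assoc, mul_smul, mul_smul, hEv,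
      smul_zero, zero_add, smul_assoc, sub_smul, smul_assoc, mul_smul (F ^ j)]
    exact Submodule.smul_mem _ _ (Submodule.sub_mem _ (pow_smul_mem_lowerings F j hKv)
      (Submodule.smul_mem _ _ (pow_smul_mem_lowerings F j hv)))

section FiniteDimensional

variable [FiniteDimensional k M]

theorem exists_E_pow_smul_eq_zero (h : IsQuantumTriple c a m K Ki E F) :
    ∃ n : ℕ, ∀ v : M, E ^ n • v = 0 := by
  have hc : ¬IsOfFinOrder c := fun hc => h.not_isOfFinOrder hc.pow
  have hE : IsNilpotent (lsmul k k M E) :=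
    isNilpotent_of_mul_eq_smul_mul (u := lsmul k k M K) (v := lsmul k k M Ki) h.c_ne_zero hc
      (by rw [← map_mul, h.K_mul_Ki, map_one])
      (by rw [← map_mul, h.K_mul_E, map_smul, map_mul])
      (Algebra.IsIntegral.isIntegral _)
  obtain ⟨n, hn⟩ := hE
  rw [← map_pow] at hn
  exact ⟨n, DFunLike.congr_fun hn⟩

theorem mem_of_E_smul_mem (h : IsQuantumTriple c a m K Ki E F) {N : Submodule A M}
    (hN : (lsmul k k M E).ker ≤ N.restrictScalars k) {w : M} (hw : E • w ∈ N) : w ∈ N := by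
  obtain ⟨n, hF⟩ := h.symm.exists_E_pow_smul_eq_zero (M := M)
  set P := weightPoly (c ^ m) n
  set Q := (weightPoly (c ^ m)⁻¹ n).comp (C ((c ^ m) ^ 2) * X)
  have hP : aeval (K ^ (2 * m)) P • w ∈ N :=
    h.weightPoly_smul_mem N n hw (by rw [hF]; exact N.zero_mem)
  have hQ : aeval (K ^ (2 * m)) Q • w ∈ N := by
    obtain ⟨x, y, hxy⟩ := h.exists_aeval_weightPoly_inv_eq n
    have hEQ : E * aeval (K ^ (2 * m)) Q = (E * x + F ^ n * y) * E := by
      rw [← hxy, ← (semiconjBy_aeval h.semiconjBy_E _).eq, aeval_comp, map_mul, aeval_C, aeval_X,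
        Algebra.smul_def]
    have hker : aeval (K ^ (2 * m)) Q • w - x • E • w ∈ (lsmul k k M E).ker := by
      change E • (aeval (K ^ (2 * m)) Q • w - x • E • w) = 0
      rw [smul_sub, ← mul_smul, hEQ]
      simp only [add_mul, add_smul, mul_smul, hF, add_zero, sub_self]
    exact (N.sub_mem_iff_left (N.smul_mem x hw)).1 (hN hker)
  obtain ⟨r, s, hrs⟩ := isCoprime_weightPoly_comp h.c_pow_ne_zero h.not_isOfFinOrder n n
  have hone := congr_arg (aeval (K ^ (2 * m))) hrs
  rw [map_add, map_mul, map_mul, map_one] at hone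
  rw [← one_smul A w, ← hone, add_smul, mul_smul, mul_smul]
  exact N.add_mem (N.smul_mem _ hP) (N.smul_mem _ hQ)

theorem eq_top_of_ker_le (h : IsQuantumTriple c a m K Ki E F) {N : Submodule A M}
    (hN : (lsmul k k M E).ker ≤ N.restrictScalars k) : N = ⊤ := by
  obtain ⟨n, hn⟩ := h.exists_E_pow_smul_eq_zero (M := M)
  have hmem (i : ℕ) (w : M) (hw : E ^ i • w ∈ N) : w ∈ N := by
    induction i generalizing w with
    | zero => simpa using hw
    | succ i ih => exact h.mem_of_E_smul_mem hN (ih _ (by rwa [← mul_smul, ← pow_succ]))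
  exact eq_top_iff.2 fun w _ => hmem n w (by rw [hn]; exact N.zero_mem)

theorem eq_bot_of_disjoint_ker (h : IsQuantumTriple c a m K Ki E F) {N : Submodule A M}
    (hN : Disjoint (N.restrictScalars k) (lsmul k k M E).ker) : N = ⊥ := by
  obtain ⟨n, hn⟩ := h.exists_E_pow_smul_eq_zero (M := M)
  have hzero (i : ℕ) (v : M) (hv : v ∈ N) (hiv : E ^ i • v = 0) : v = 0 := by
    induction i generalizing v with
    | zero => simpa using hiv
    | succ i ih =>
      have hEv : E • v = 0 := ih _ (N.smul_mem E hv) (by rw [← mul_smul, ← pow_succ, hiv])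
      exact Submodule.disjoint_def.1 hN v hv hEv
  exact (Submodule.eq_bot_iff N).2 fun v hv => hzero n v hv (hn v)

theorem restrictScalars_span_le (h : IsQuantumTriple c a m K Ki E F)
    (hgen : Algebra.adjoin k {K, Ki, E, F} = ⊤) {W : Submodule k M}
    (hWE : W ≤ (lsmul k k M E).ker) (hWK : W ∈ (lsmul k k M K).invtSubmodule) :
    (Submodule.span A (W : Set M)).restrictScalars k ≤ W ⊔ (lsmul k k M F).range := by
  have hK_Ki : lsmul k k M Ki * lsmul k k M K = 1 := by rw [← map_mul, h.Ki_mul_K, map_one]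
  have hWKi : W ∈ (lsmul k k M Ki).invtSubmodule := mem_invtSubmodule_of_mul_eq_one hK_Ki hWK
  have hTK := h.lowerings_mem_invtSubmodule_K hWK
  have hT : ∀ x ∈ ({K, Ki, E, F} : Set A), lowerings F W ∈ (lsmul k k M x).invtSubmodule := by
    simp only [Set.mem_insert_iff, Set.mem_singleton_iff, forall_eq_or_imp, forall_eq]
    refine ⟨hTK, ?_, ?_, ?_⟩
    · exact mem_invtSubmodule_of_mul_eq_one hK_Ki hTK
    · exact h.lowerings_mem_invtSubmodule_E hWE hWK hWKi
    · exact lowerings_mem_invtSubmodule F W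
  calc (Submodule.span A (W : Set M)).restrictScalars k
      ≤ (Submodule.span A (lowerings F W : Set M)).restrictScalars k :=
        Submodule.span_mono (le_lowerings F W)
    _ = lowerings F W := restrictScalars_span_eq_of_adjoin_eq_top hgen hT
    _ ≤ W ⊔ (lsmul k k M F).range := lowerings_le_sup_range F W

theorem ker_sup_range_eq_top (h : IsQuantumTriple c a m K Ki E F)
    (hgen : Algebra.adjoin k {K, Ki, E, F} = ⊤) :
    (lsmul k k M E).ker ⊔ (lsmul k k M F).range = ⊤ := by
  have hspan := h.restrictScalars_span_le hgen le_rfl h.ker_mem_invtSubmodule (M := M)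
  have htop : Submodule.span A ((lsmul k k M E).ker : Set M) = ⊤ :=
    h.eq_top_of_ker_le Submodule.subset_span
  rwa [htop, Submodule.restrictScalars_top, top_le_iff] at hspan

theorem disjoint_ker_range (h : IsQuantumTriple c a m K Ki E F)
    (hgen : Algebra.adjoin k {K, Ki, E, F} = ⊤) :
    Disjoint (lsmul k k M E).ker (lsmul k k M F).range := by
  have hgen' : Algebra.adjoin k {K, Ki, F, E} = ⊤ := by rwa [Set.pair_comm F E]
  exact disjoint_ker_range_of_sup_eq_top (h.ker_sup_range_eq_top hgen)
    (h.symm.ker_sup_range_eq_top hgen')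

theorem exists_disjoint_sup_eq_ker (h : IsQuantumTriple c a m K Ki E F)
    (hm : ((2 * m : ℕ) : k) ≠ 0) {W : Submodule k M} (hWK : W ∈ (lsmul k k M K).invtSubmodule)
    (hWE : W ≤ (lsmul k k M E).ker) :
    ∃ U ≤ (lsmul k k M E).ker, U ∈ (lsmul k k M K).invtSubmodule ∧ Disjoint W U ∧
      W ⊔ U = (lsmul k k M E).ker := by
  obtain ⟨n, hF⟩ := h.symm.exists_E_pow_smul_eq_zero (M := M)
  have hsq := (separable_expand_weightPoly h.c_pow_ne_zero h.not_isOfFinOrder hm n).squarefree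
  have hzero (v : M) (hv : v ∈ (lsmul k k M E).ker) :
      aeval (lsmul k k M K) (expand k (2 * m) (weightPoly (c ^ m) n)) v = 0 := by
    rw [expand_aeval, ← map_pow, aeval_algHom_apply]
    exact h.weightPoly_smul_mem (⊥ : Submodule A M) n hv (hF v)
  exact (isSemisimple_restrict_iff _ h.ker_mem_invtSubmodule).1
    (isSemisimple_restrict_of_squarefree _ hsq hzero) W hWK hWE

end FiniteDimensional

variable (M) in
theorem isSemisimpleModule [FiniteDimensional k M] (h : IsQuantumTriple c a m K Ki E F)
    (hm : ((2 * m : ℕ) : k) ≠ 0) (hgen : Algebra.adjoin k {K, Ki, E, F} = ⊤) :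
    IsSemisimpleModule A M := by
  refine { exists_isCompl := fun N => ?_ }
  have hNK : N.restrictScalars k ⊓ (lsmul k k M E).ker ∈ (lsmul k k M K).invtSubmodule :=
    Sublattice.inf_mem (fun v hv => N.smul_mem K hv) h.ker_mem_invtSubmodule
  obtain ⟨U, hUE, hUK, hdisj, hsup⟩ := h.exists_disjoint_sup_eq_ker hm hNK inf_le_right
  set N' : Submodule A M := Submodule.span A (U : Set M)
  have hUN' : U ≤ N'.restrictScalars k := Submodule.subset_span
  have hN'U : N'.restrictScalars k ⊓ (lsmul k k M E).ker ≤ U :=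
    calc N'.restrictScalars k ⊓ (lsmul k k M E).ker
        ≤ (U ⊔ (lsmul k k M F).range) ⊓ (lsmul k k M E).ker :=
          inf_le_inf_right _ (h.restrictScalars_span_le hgen hUE hUK)
      _ = U := by
          rw [sup_inf_assoc_of_le _ hUE, (h.disjoint_ker_range hgen).symm.eq_bot, sup_bot_eq]
  refine ⟨N', disjoint_iff.2 (h.eq_bot_of_disjoint_ker (k := k) ?_),
    codisjoint_iff.2 (h.eq_top_of_ker_le (k := k) ?_)⟩
  · refine Submodule.disjoint_def.2 fun v hv hvE => ?_
    exact Submodule.disjoint_def.1 hdisj v ⟨hv.1, hvE⟩ (hN'U ⟨hv.2, hvE⟩)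
  · rw [Submodule.restrictScalars_sup, ← hsup]
    exact sup_le_sup inf_le_left hUN'

end IsQuantumTriple

section DeformedQuantumGroup

variable {q a : ℂ} {m : ℕ}

theorem NotRootOfUnity.not_isOfFinOrder_pow (hq : NotRootOfUnity q) {n : ℕ} (hn : 0 < n) :
    ¬IsOfFinOrder (q ^ n) := by
  rw [isOfFinOrder_iff_pow_eq_one]
  rintro ⟨i, hi, hqi⟩
  exact hq.2 (n * i) (Nat.mul_pos hn hi) (by rw [pow_mul, hqi])

theorem NotRootOfUnity.zpow_sub_zpow_neg_ne_zero (hq : NotRootOfUnity q) (hm : 0 < m) :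
    q ^ (m : ℤ) - q ^ (-(m : ℤ)) ≠ 0 := by
  intro h
  refine hq.2 (m + m) (by lia) ?_
  rw [zpow_neg, zpow_natCast, sub_eq_zero] at h
  rw [pow_add]
  nth_rw 1 [h]
  exact inv_mul_cancel₀ (pow_ne_zero m hq.1)

theorem adjoin_gens_eq_top (q a : ℂ) (m : ℕ) :
    Algebra.adjoin ℂ {genK q a m, genKinv q a m, genE q a m, genF q a m} = ⊤ := by
  have hrange : Set.range (FreeAlgebra.ι ℂ : Fin 4 → FreeAlgebra ℂ (Fin 4)) =
      {.ι ℂ 0, .ι ℂ 1, .ι ℂ 2, .ι ℂ 3} := by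
    ext x
    simp [Fin.exists_fin_succ, eq_comm]
  have himage : RingQuot.mkAlgHom ℂ (UqRel q a m) '' Set.range (FreeAlgebra.ι ℂ) =
      {genK q a m, genKinv q a m, genE q a m, genF q a m} := by
    rw [hrange]
    simp only [Set.image_insert_eq, Set.image_singleton]
    rfl
  rw [← himage, ← AlgHom.map_adjoin, FreeAlgebra.adjoin_range_ι, Algebra.map_top,
    AlgHom.range_eq_top]
  exact RingQuot.mkAlgHom_surjective ℂ _

theorem isQuantumTriple_gens (hq : NotRootOfUnity q) (ha : a ≠ 0) (hm : 0 < m) :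
    IsQuantumTriple (q ^ 2) a m (genK q a m) (genKinv q a m) (genE q a m) (genF q a m) where
  c_ne_zero := pow_ne_zero 2 hq.1
  a_ne_zero := ha
  not_isOfFinOrder := by
    rw [← pow_mul]
    exact hq.not_isOfFinOrder_pow (by lia)
  K_mul_Ki := by simpa [genK, genKinv] using RingQuot.mkAlgHom_rel ℂ UqRel.KKinv
  Ki_mul_K := by simpa [genK, genKinv] using RingQuot.mkAlgHom_rel ℂ UqRel.KinvK
  K_mul_E := by simpa [genK, genE] using RingQuot.mkAlgHom_rel ℂ UqRel.KE
  K_mul_F := by simpa [genK, genF] using RingQuot.mkAlgHom_rel ℂ UqRel.KF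
  E_mul_F := by
    simpa [genK, genKinv, genE, genF] using RingQuot.mkAlgHom_rel ℂ UqRel.EF

theorem stmt18_general (q a : ℂ) (m : ℕ) (hm : 0 < m) (ha : a ≠ 0) (hq : NotRootOfUnity q)
    (M : Type*) [AddCommGroup M] [Module ℂ M] [Module (Uq q a m) M] [IsScalarTower ℂ (Uq q a m) M]
    [FiniteDimensional ℂ M] : IsSemisimpleModule (Uq q a m) M :=
  (isQuantumTriple_gens hq ha hm).isSemisimpleModule M (Nat.cast_ne_zero.2 (by lia))
    (adjoin_gens_eq_top q a m)

end DeformedQuantumGroup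

/-- for `κ ≠ 0` (relation `EF - FE = (Kᵐ - K⁻ᵐ)/(qᵐ - q⁻ᵐ)`), every
finite-dimensional `U_q(sl*₂,κ)`-module is semisimple. -/
theorem stmt18 (q : ℂ) (m : ℕ) (hm : 0 < m) (hq : NotRootOfUnity q)
    (M : Type) [AddCommGroup M] [Module ℂ M]
    [Module (Uq q (q ^ (m : ℤ) - q ^ (-(m : ℤ)))⁻¹ m) M]
    [IsScalarTower ℂ (Uq q (q ^ (m : ℤ) - q ^ (-(m : ℤ)))⁻¹ m) M]
    [FiniteDimensional ℂ M] :
    IsSemisimpleModule (Uq q (q ^ (m : ℤ) - q ^ (-(m : ℤ)))⁻¹ m) M := by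
  exact stmt18_general q _ m hm (inv_ne_zero (hq.zpow_sub_zpow_neg_ne_zero hm)) hq M

end
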